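/- (Uniqueness of Kantorovich potentials for Lipschitz costs.) Let X = ℝ^d, let μ be equivalent to Lebesgue measure on spt μ, with Lebesgue-null boundary ∂(spt μ) and connected interior Int(spt μ). Let Γ = spt π where π ∈ Π(μ,ν) is an optimal transport for the continuous cost c, and suppose c(·,y) is differentiable for every y ∈ Y and locally Lipschitz uniformly in y. Then for any c-convex functions ψ_1, ψ_2 on X with Γ ⊂ ∂_c ψ_i (i = 1,2), the difference ψ_1 − ψ_2 is constant on spt μ (in particular on proj_X Γ). -/

import Mathlib

open MeasureTheory Filter Topology Set
open scoped ENNReal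

noncomputable section

namespace EOT

variable {X Y : Type*}

/-- A coupling of `μ` and `ν`: a probability measure on the product with the given marginals. -/
def IsCoupling [MeasurableSpace X] [MeasurableSpace Y]
    (μ : Measure X) (ν : Measure Y) (π : Measure (X × Y)) : Prop :=
  IsProbabilityMeasure π ∧ π.map Prod.fst = μ ∧ π.map Prod.snd = ν

/-- `(c,ε)`-cyclical invariance: `π` is equivalent to `P = μ ⊗ ν`, with a positive version of the
density satisfying the cyclical identity for all `k` points. -/
def IsCyclInvariant [MeasurableSpace X] [MeasurableSpace Y]
    (c : X → Y → ℝ) (ε : ℝ) (μ : Measure X) (ν : Measure Y)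
    (π : Measure (X × Y)) : Prop :=
  IsCoupling μ ν π ∧
  ∃ D : X × Y → ℝ, Measurable D ∧ (∀ z, 0 < D z) ∧
    π = (μ.prod ν).withDensity (fun z => ENNReal.ofReal (D z)) ∧
    ∀ (k : ℕ) (x : Fin (k + 1) → X) (y : Fin (k + 1) → Y),
      (∏ i, D (x i, y i)) =
        Real.exp (-(1 / ε) * ((∑ i, c (x i) (y i)) - ∑ i, c (x i) (y (i + 1)))) *
        ∏ i, D (x i, y (i + 1))

/-- Topological support of a measure. -/
def mSupport {Z : Type*} [TopologicalSpace Z] [MeasurableSpace Z] (π : Measure Z) : Set Z :=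
  {z | ∀ U : Set Z, IsOpen U → z ∈ U → 0 < π U}

/-- Weak convergence `π ε → π₀` as `ε → 0⁺`, tested against bounded continuous functions. -/
def TendstoWeakly {Z : Type*} [TopologicalSpace Z] [MeasurableSpace Z]
    (π : ℝ → Measure Z) (π₀ : Measure Z) : Prop :=
  ∀ f : BoundedContinuousFunction Z ℝ,
    Tendsto (fun ε => ∫ z, f z ∂(π ε)) (𝓝[>] (0 : ℝ)) (𝓝 (∫ z, f z ∂π₀))

/-- `c`-cyclical monotonicity of a set `Γ ⊆ X × Y`. -/
def CCyclMonotone (c : X → Y → ℝ) (Γ : Set (X × Y)) : Prop :=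
  ∀ (k : ℕ) (p : Fin (k + 1) → X × Y), (∀ i, p i ∈ Γ) →
    (∑ i, c (p i).1 (p i).2) ≤ ∑ i, c (p i).1 (p (i + 1)).2

/-- The rate function `I(x,y)`: supremum over `k ≥ 2`, points `(x_i,y_i)_{i=2}^k ⊆ Γ`
(the first point being `z`) and permutations `σ` of the cost difference. -/
def rateI (c : X → Y → ℝ) (Γ : Set (X × Y)) (z : X × Y) : EReal :=
  ⨆ (k : ℕ) (p : Fin (k + 2) → X × Y) (_ : p 0 = z) (_ : ∀ i, i ≠ 0 → p i ∈ Γ)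
    (σ : Equiv.Perm (Fin (k + 2))),
    (((∑ i, c (p i).1 (p i).2) - ∑ i, c (p i).1 (p (σ i)).2 : ℝ) : EReal)

/-- The variant of the rate function using only the cyclic shift. -/
def rateICyc (c : X → Y → ℝ) (Γ : Set (X × Y)) (z : X × Y) : EReal :=
  ⨆ (k : ℕ) (p : Fin (k + 2) → X × Y) (_ : p 0 = z) (_ : ∀ i, i ≠ 0 → p i ∈ Γ),
    (((∑ i, c (p i).1 (p i).2) - ∑ i, c (p i).1 (p (i + 1)).2 : ℝ) : EReal)

open scoped Classical in
/-- Relative entropy (Kullback–Leibler divergence) `H(π|R)`, valued in `EReal`. -/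
def relEntropy {Z : Type*} [MeasurableSpace Z] (π R : Measure Z) : EReal :=
  if π ≪ R ∧ Integrable (fun z => Real.log (π.rnDeriv R z).toReal) π
  then ((∫ z, Real.log (π.rnDeriv R z).toReal ∂π : ℝ) : EReal)
  else ⊤

/-- Transport cost `∫ c dπ` (as a lower integral). -/
def transportCost [MeasurableSpace X] [MeasurableSpace Y]
    (c : X → Y → ℝ) (π : Measure (X × Y)) : ℝ≥0∞ :=
  ∫⁻ z, ENNReal.ofReal (c z.1 z.2) ∂π

/-- Entropic optimal transport objective `∫ c dπ + ε H(π|μ⊗ν)`. -/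
def eotObj [MeasurableSpace X] [MeasurableSpace Y]
    (c : X → Y → ℝ) (ε : ℝ) (μ : Measure X) (ν : Measure Y) (π : Measure (X × Y)) : EReal :=
  (transportCost c π : EReal) + (ε : EReal) * relEntropy π (μ.prod ν)

/-- The `c`-conjugate `ψ^c(y) = inf_x [ψ(x) + c(x,y)]`. -/
def cConj (c : X → Y → ℝ) (ψ : X → EReal) (y : Y) : EReal :=
  ⨅ x, ψ x + (c x y : EReal)

/-- A proper `c`-convex function `ψ(x) = sup_y [ζ(y) − c(x,y)]`. -/
def IsCConvex (c : X → Y → ℝ) (ψ : X → EReal) : Prop :=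
  (∀ x, ψ x ≠ ⊥) ∧ (∃ x, ψ x ≠ ⊤) ∧
  ∃ ζ : Y → EReal, ∀ x, ψ x = ⨆ y, ζ y - (c x y : EReal)

/-- The `c`-subdifferential `∂_c ψ = {(x,y) : ψ^c(y) − ψ(x) = c(x,y)}`. -/
def cSubdiff (c : X → Y → ℝ) (ψ : X → EReal) : Set (X × Y) :=
  {p | cConj c ψ p.2 - ψ p.1 = (c p.1 p.2 : EReal)}

/-- A Kantorovich potential for `Γ`: a `c`-convex `ψ` with `Γ ⊆ ∂_c ψ`. -/
def IsKantorovichPotential (c : X → Y → ℝ) (Γ : Set (X × Y)) (ψ : X → EReal) : Prop :=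
  IsCConvex c ψ ∧ Γ ⊆ cSubdiff c ψ

/-- Uniqueness of Kantorovich potentials on a set `Λ ⊆ X`. -/
def UniquenessOfPotentials (c : X → Y → ℝ) (Γ : Set (X × Y)) (Λ : Set X) : Prop :=
  ∀ ψ₁ ψ₂ : X → EReal, IsKantorovichPotential c Γ ψ₁ → IsKantorovichPotential c Γ ψ₂ →
    ∀ x ∈ Λ, ∀ x' ∈ Λ, ψ₁ x - ψ₂ x = ψ₁ x' - ψ₂ x'

/-- The Rockafellar antiderivative `ψ_{(x₀,y₀)}` of `Γ`. -/
def rockafellar (c : X → Y → ℝ) (Γ : Set (X × Y)) (z₀ : X × Y) (x : X) : EReal :=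
  ⨆ (k : ℕ) (p : Fin (k + 1) → X × Y) (_ : ∀ i, p i ∈ Γ),
    ((c z₀.1 z₀.2 - c (p 0).1 z₀.2 +
        ∑ i : Fin (k + 1),
          (c (p i).1 (p i).2 -
            c (if h : (i : ℕ) + 1 < k + 1 then (p ⟨(i : ℕ) + 1, h⟩).1 else x) (p i).2) : ℝ) : EReal)

section Statement

variable {d : ℕ} {Y : Type*}
  [MeasurableSpace Y] [TopologicalSpace Y] [PolishSpace Y] [BorelSpace Y]

local notation "E" => EuclideanSpace ℝ (Fin d)

/-!
A `c`-convex function inherits the local Lipschitz bounds of the cost, so potentials are finite,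
locally Lipschitz, and differentiable almost everywhere by Rademacher's theorem. If `(x, y) ∈ Γ`,
then `ψᵢ + c(·, y)` is minimal at `x`, so `∇ψ₁(x) = -∇ₓc(x, y) = ∇ψ₂(x)` wherever both sides exist.
Since `proj_X Γ` has full measure, `ψ₁ - ψ₂` has zero gradient almost everywhere in the interior of
the support of `μ`. By Fubini, a locally Lipschitz function with this property is constant along
almost every line segment of a given direction and length in a ball, hence on the ball by continuity
and on the interior by connectedness. Since the boundary is null, the interior is dense in the
support.
-/

section CConvex

variable {W : Type*} {c : X → W → ℝ} {ψ : X → EReal} {Γ : Set (X × W)} {Λ Λ' : Set X}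

theorem UniquenessOfPotentials.mono (h : UniquenessOfPotentials c Γ Λ) (hΛ : Λ' ⊆ Λ) :
    UniquenessOfPotentials c Γ Λ' :=
  fun ψ₁ ψ₂ h₁ h₂ x hx x' hx' => h ψ₁ ψ₂ h₁ h₂ x (hΛ hx) x' (hΛ hx')

theorem IsCConvex.le_add_coe (hψ : IsCConvex c ψ) {x x' : X} {r : ℝ}
    (hr : ∀ y, c x' y ≤ c x y + r) : ψ x ≤ ψ x' + r := by
  obtain ⟨-, -, ζ, hζ⟩ := hψ
  simp only [hζ x, iSup_le_iff]
  intro y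
  have hζy : ζ y - (c x' y : EReal) ≤ ψ x' :=
    (le_iSup (fun y => ζ y - (c x' y : EReal)) y).trans_eq (hζ x').symm
  refine le_trans ?_ (add_le_add_left hζy _)
  cases ζ y with
  | bot => simp
  | top => simp
  | coe a =>
    norm_cast
    linarith [hr y]

theorem add_le_add_of_mem_cSubdiff {p : X × W} (hp : p ∈ cSubdiff c ψ) (x : X) :
    ψ p.1 + (c p.1 p.2 : EReal) ≤ ψ x + (c x p.2 : EReal) := by
  have hcontact : cConj c ψ p.2 - ψ p.1 = (c p.1 p.2 : EReal) := hp
  calc ψ p.1 + (c p.1 p.2 : EReal) ≤ cConj c ψ p.2 := by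
        rw [← hcontact]
        cases ψ p.1 with
        | bot => simp
        | top => simp
        | coe r => rw [add_comm, EReal.sub_add_cancel]
    _ ≤ ψ x + (c x p.2 : EReal) := iInf_le (fun x => ψ x + (c x p.2 : EReal)) x

section Lipschitz

variable [PseudoMetricSpace X]

/-- A cost `c` that is locally Lipschitz in its first variable, uniformly in the second: on each
compact set, one Lipschitz constant serves all the functions `c(·, y)`. -/
def UniformlyLocallyLipschitz (c : X → W → ℝ) : Prop :=
  ∀ K : Set X, IsCompact K → ∃ L : NNReal, ∀ y, LipschitzOnWith L (fun x => c x y) K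

theorem IsCConvex.le_add_mul_dist (hψ : IsCConvex c ψ) {L : NNReal} {s : Set X}
    (hc : ∀ y, LipschitzOnWith L (fun x => c x y) s) {x x' : X} (hx : x ∈ s) (hx' : x' ∈ s) :
    ψ x ≤ ψ x' + (L * dist x x' : ℝ) :=
  hψ.le_add_coe fun y => dist_comm x x' ▸ (hc y).le_add_mul hx' hx

theorem IsCConvex.coe_toReal (hψ : IsCConvex c ψ) (hc : UniformlyLocallyLipschitz c) (x : X) :
    ((ψ x).toReal : EReal) = ψ x := by
  obtain ⟨x₀, hx₀⟩ := hψ.2.1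
  obtain ⟨L, hL⟩ := hc {x, x₀} (Set.toFinite _).isCompact
  have hle : ψ x ≤ ψ x₀ + (L * dist x x₀ : ℝ) := hψ.le_add_mul_dist hL (by simp) (by simp)
  have htop : ψ x ≠ ⊤ := ne_top_of_le_ne_top (EReal.add_ne_top hx₀ (EReal.coe_ne_top _)) hle
  exact EReal.coe_toReal htop (hψ.1 x)

theorem IsCConvex.locallyLipschitz_toReal [WeaklyLocallyCompactSpace X] (hψ : IsCConvex c ψ)
    (hc : UniformlyLocallyLipschitz c) : LocallyLipschitz fun x => (ψ x).toReal := by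
  intro x
  obtain ⟨K, hK, hKx⟩ := exists_compact_mem_nhds x
  obtain ⟨L, hL⟩ := hc K hK
  refine ⟨L, K, hKx, LipschitzOnWith.of_le_add_mul L fun z hz z' hz' => ?_⟩
  have hle := hψ.le_add_mul_dist hL hz hz'
  rw [← hψ.coe_toReal hc z, ← hψ.coe_toReal hc z'] at hle
  exact_mod_cast hle

theorem IsKantorovichPotential.isMinOn_toReal_add (hψ : IsKantorovichPotential c Γ ψ)
    (hc : UniformlyLocallyLipschitz c) {p : X × W} (hp : p ∈ Γ) :
    IsMinOn (fun x => (ψ x).toReal + c x p.2) univ p.1 := by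
  intro x _
  have hle := add_le_add_of_mem_cSubdiff (hψ.2 hp) x
  rw [← hψ.1.coe_toReal hc p.1, ← hψ.1.coe_toReal hc x] at hle
  exact_mod_cast hle

end Lipschitz

theorem UniformlyLocallyLipschitz.of_abs_sub_le [SeminormedAddCommGroup X]
    (hc : ∀ K : Set X, IsCompact K → ∃ L : ℝ,
      ∀ x ∈ K, ∀ x' ∈ K, ∀ y, |c x y - c x' y| ≤ L * ‖x - x'‖) :
    UniformlyLocallyLipschitz c := by
  intro K hK
  obtain ⟨L, hL⟩ := hc K hK
  refine ⟨L.toNNReal, fun y => LipschitzOnWith.of_dist_le_mul fun x hx x' hx' => ?_⟩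
  rw [Real.dist_eq, dist_eq_norm]
  exact (hL x hx x' hx' y).trans (by gcongr; exact Real.le_coe_toNNReal L)

end CConvex

section Support

variable {Z : Type*} [TopologicalSpace Z] [MeasurableSpace Z]

theorem mSupport_eq_support (m : Measure Z) : mSupport m = m.support := by
  rw [Measure.support_eq_forall_isOpen]
  ext z
  exact forall_congr' fun U => forall_comm

theorem support_subset_closure_interior [OpensMeasurableSpace Z] {μ m : Measure Z} {s : Set Z}
    (hμ : μ ≪ m.restrict s) (hs : m (frontier s) = 0) : μ.support ⊆ closure (interior s) := by
  refine Measure.support_subset_of_isClosed isClosed_closure (hμ ?_)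
  rw [Measure.restrict_apply isClosed_closure.isOpen_compl.measurableSet]
  refine measure_mono_null ?_ hs
  rintro z ⟨hz, hzs⟩
  exact ⟨subset_closure hzs, fun hzi => hz (subset_closure hzi)⟩

theorem ae_map_mem_image [TopologicalSpace X] [T2Space X] [MeasurableSpace X]
    [BorelSpace X] [T2Space Z] [OpensMeasurableSpace Z] {m : Measure Z} [IsFiniteMeasure m]
    [m.InnerRegularCompactLTTop] {f : Z → X} (hf : Continuous f) {s : Set Z}
    (hs : MeasurableSet s) (hms : ∀ᵐ z ∂m, z ∈ s) : ∀ᵐ x ∂(m.map f), x ∈ f '' s := by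
  rw [ae_iff, ← nonpos_iff_eq_zero]
  -- `f '' s` need not be measurable, so it is approximated from inside by images of compact sets.
  refine le_of_forall_gt fun ε hε => ?_
  obtain ⟨K, hKs, hK, hKε⟩ := hs.exists_isCompact_sdiff_lt (measure_ne_top m s) hε.ne'
  have hfK : MeasurableSet (f '' K) := (hK.image hf).measurableSet
  calc m.map f (f '' s)ᶜ ≤ m.map f (f '' K)ᶜ :=
        measure_mono (compl_subset_compl.2 (image_mono hKs))
    _ = m (f ⁻¹' (f '' K)ᶜ) := Measure.map_apply hf.measurable hfK.compl
    _ ≤ m Kᶜ := measure_mono (compl_subset_compl.2 (subset_preimage_image f K))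
    _ ≤ m (s \ K) := measure_mono_ae (hms.mono fun z hzs hzK => ⟨hzs, hzK⟩)
    _ < ε := hKε

end Support

section ZeroDerivative

variable {V F : Type*} [NormedAddCommGroup V] [NormedSpace ℝ V] [NormedAddCommGroup F]
  [NormedSpace ℝ F]

theorem eq_add_of_ae_hasFDerivAt_zero {f : V → F} {L : NNReal} {s : Set V} {x v : V}
    (hf : LipschitzOnWith L f s) (hs : ∀ t ∈ Icc (0 : ℝ) 1, x + t • v ∈ s)
    (hf₀ : ∀ᵐ t : ℝ, x + t • v ∈ s → HasFDerivAt f (0 : V →L[ℝ] F) (x + t • v)) :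
    f x = f (x + v) := by
  have hline (t : ℝ) : HasDerivAt (fun t : ℝ => x + t • v) ((1 : ℝ) • v) t :=
    ((hasDerivAt_id t).smul_const v).const_add x
  have hlineLip : LipschitzWith ‖v‖₊ fun t : ℝ => x + t • v :=
    LipschitzWith.of_dist_le_mul fun t t' => by
      rw [dist_add_left, dist_eq_norm, ← sub_smul, norm_smul, dist_eq_norm, mul_comm, coe_nnnorm]
  rw [← uIcc_of_le zero_le_one] at hs
  have hcomp : LipschitzOnWith (L * ‖v‖₊) (fun t : ℝ => f (x + t • v)) (uIcc 0 1) :=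
    hf.comp hlineLip.lipschitzOnWith hs
  obtain ⟨a, ha⟩ := hcomp.absolutelyContinuousOnInterval.const_of_ae_hasDerivAt_zero <| by
    filter_upwards [hf₀] with t ht ht01
    simpa [Function.comp_def] using (ht (hs t ht01)).comp_hasDerivAt t (hline t)
  simpa using (ha 0 left_mem_uIcc).trans (ha 1 right_mem_uIcc).symm

variable [FiniteDimensional ℝ V] [MeasurableSpace V] [BorelSpace V] {m : Measure V}
  [m.IsAddHaarMeasure]

theorem ae_ae_add_smul {p : V → Prop} (hp : ∀ᵐ x ∂m, p x) (v : V) :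
    ∀ᵐ x ∂m, ∀ᵐ t : ℝ, p (x + t • v) := by
  obtain ⟨s, hs, hsm, hsp⟩ := hp.exists_measurable_mem
  have hline := (ae_ae_add_linearMap_mem_iff (LinearMap.toSpanSingleton ℝ V v) volume m hsm).2 hs
  exact hline.mono fun x hx => hx.mono fun t ht => hsp _ ht

theorem eq_of_ae_hasFDerivAt_zero_of_convex {f : V → F} {L : NNReal} {U : Set V}
    (hU : IsOpen U) (hconv : Convex ℝ U) (hf : LipschitzOnWith L f U)
    (hf₀ : ∀ᵐ x ∂m, x ∈ U → HasFDerivAt f (0 : V →L[ℝ] F) x) {x x' : V} (hx : x ∈ U)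
    (hx' : x' ∈ U) : f x = f x' := by
  obtain ⟨v, rfl⟩ : ∃ v, x' = x + v := ⟨x' - x, by simp⟩
  have hshift : Tendsto (fun z => z + v) (𝓝 x) (𝓝 (x + v)) :=
    (continuous_add_const v).continuousAt
  have hUv : ∀ᶠ z in 𝓝 x, z ∈ U ∧ z + v ∈ U :=
    (hU.eventually_mem hx).and (hshift.eventually (hU.eventually_mem hx'))
  have hdense : ∃ᶠ z in 𝓝 x, ∀ᵐ t : ℝ,
      z + t • v ∈ U → HasFDerivAt f (0 : V →L[ℝ] F) (z + t • v) :=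
    mem_closure_iff_frequently.1 (Measure.dense_of_ae (ae_ae_add_smul hf₀ v) x)
  have hfreq : ∃ᶠ z in 𝓝 x, f z = f (z + v) :=
    (hdense.and_eventually hUv).mono fun z hz =>
      eq_add_of_ae_hasFDerivAt_zero hf (fun t ht => hconv.add_smul_mem hz.2.1 hz.2.2 ht) hz.1
  have hcont {z : V} (hz : z ∈ U) : ContinuousAt f z :=
    hf.continuousOn.continuousAt (hU.mem_nhds hz)
  have hlim := (hcont hx).tendsto.prodMk_nhds ((hcont hx').tendsto.comp hshift)
  exact isClosed_diagonal.mem_of_frequently_of_tendsto hfreq hlim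

theorem eq_of_ae_hasFDerivAt_zero {f : V → F} {U : Set V} (hU : IsOpen U)
    (hUc : IsPreconnected U) (hf : LocallyLipschitzOn U f)
    (hf₀ : ∀ᵐ x ∂m, x ∈ U → HasFDerivAt f (0 : V →L[ℝ] F) x) {x x' : V} (hx : x ∈ U)
    (hx' : x' ∈ U) : f x = f x' := by
  refine hUc.induction₂ (fun z z' => f z = f z') (fun z hz => ?_)
    (fun _ _ _ _ _ _ h h' => h.trans h') (fun _ _ _ _ h => h.symm) hx hx'
  obtain ⟨L, t, ht, hL⟩ := hf hz
  rw [hU.nhdsWithin_eq hz] at ht ⊢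
  obtain ⟨r, hr, hball⟩ := Metric.mem_nhds_iff.1 (inter_mem ht (hU.mem_nhds hz))
  filter_upwards [Metric.ball_mem_nhds z hr] with z' hz'
  exact eq_of_ae_hasFDerivAt_zero_of_convex Metric.isOpen_ball (convex_ball z r)
    (hL.mono (hball.trans inter_subset_left)) (hf₀.mono fun y hy hyb => hy (hball hyb).2)
    (Metric.mem_ball_self hr) hz'

theorem ae_differentiableAt_of_locallyLipschitz [FiniteDimensional ℝ F] {f : V → F}
    (hf : LocallyLipschitz f) : ∀ᵐ x ∂m, DifferentiableAt ℝ f x := by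
  refine measure_null_of_locally_null _ fun x _ => ?_
  obtain ⟨L, t, ht, hL⟩ := hf x
  have hnull := ae_iff.1 (hL.ae_differentiableWithinAt_of_mem (μ := m))
  refine ⟨_, inter_mem_nhdsWithin _ (interior_mem_nhds.2 ht), measure_mono_null ?_ hnull⟩
  rintro z ⟨hz, hzt⟩ hdiff
  exact hz ((hdiff (interior_subset hzt)).differentiableAt (mem_interior_iff_mem_nhds.1 hzt))

end ZeroDerivative

section Uniqueness

variable {V W : Type*} [NormedAddCommGroup V] [NormedSpace ℝ V] {c : V → W → ℝ}
  {Γ : Set (V × W)}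

theorem fderiv_eq_neg_of_isLocalMin_add {f g : V → ℝ} {x : V} (hf : DifferentiableAt ℝ f x)
    (hg : DifferentiableAt ℝ g x) (hmin : IsLocalMin (fun z => f z + g z) x) :
    fderiv ℝ f x = -fderiv ℝ g x :=
  eq_neg_of_add_eq_zero_left (hmin.hasFDerivAt_eq_zero (hf.hasFDerivAt.add hg.hasFDerivAt))

theorem IsKantorovichPotential.hasFDerivAt_sub_zero {ψ₁ ψ₂ : V → EReal}
    (h₁ : IsKantorovichPotential c Γ ψ₁) (h₂ : IsKantorovichPotential c Γ ψ₂)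
    (hc : UniformlyLocallyLipschitz c) {p : V × W} (hp : p ∈ Γ)
    (hcp : DifferentiableAt ℝ (fun x => c x p.2) p.1)
    (hd₁ : DifferentiableAt ℝ (fun x => (ψ₁ x).toReal) p.1)
    (hd₂ : DifferentiableAt ℝ (fun x => (ψ₂ x).toReal) p.1) :
    HasFDerivAt (fun x => (ψ₁ x).toReal - (ψ₂ x).toReal) (0 : V →L[ℝ] ℝ) p.1 := by
  have hfderiv := hd₁.hasFDerivAt.sub hd₂.hasFDerivAt
  have hmin₁ := (h₁.isMinOn_toReal_add hc hp).isLocalMin univ_mem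
  have hmin₂ := (h₂.isMinOn_toReal_add hc hp).isLocalMin univ_mem
  rwa [fderiv_eq_neg_of_isLocalMin_add hd₁ hcp hmin₁,
    fderiv_eq_neg_of_isLocalMin_add hd₂ hcp hmin₂, sub_self] at hfderiv

variable [FiniteDimensional ℝ V] [MeasurableSpace V] [BorelSpace V]

theorem uniquenessOfPotentials_closure (m : Measure V) [m.IsAddHaarMeasure] {U : Set V}
    (hU : IsOpen U) (hUc : IsPreconnected U)
    (hUΓ : ∀ᵐ x ∂m, x ∈ U → x ∈ Prod.fst '' Γ)
    (hdiff : ∀ p ∈ Γ, DifferentiableAt ℝ (fun x => c x p.2) p.1)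
    (hc : UniformlyLocallyLipschitz c) : UniquenessOfPotentials c Γ (closure U) := by
  intro ψ₁ ψ₂ h₁ h₂ x hx x' hx'
  have hlip₁ := h₁.1.locallyLipschitz_toReal hc
  have hlip₂ := h₂.1.locallyLipschitz_toReal hc
  have hlip : LocallyLipschitz fun x => (ψ₁ x).toReal - (ψ₂ x).toReal := hlip₁.sub hlip₂
  have hfderiv : ∀ᵐ x ∂m, x ∈ U →
      HasFDerivAt (fun x => (ψ₁ x).toReal - (ψ₂ x).toReal) (0 : V →L[ℝ] ℝ) x := by
    filter_upwards [hUΓ, ae_differentiableAt_of_locallyLipschitz hlip₁,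
      ae_differentiableAt_of_locallyLipschitz hlip₂] with x hxΓ hd₁ hd₂ hxU
    obtain ⟨p, hp, rfl⟩ := hxΓ hxU
    exact h₁.hasFDerivAt_sub_zero h₂ hc hp (hdiff p hp) hd₁ hd₂
  have hconst : ((fun x => (ψ₁ x).toReal - (ψ₂ x).toReal) '' U).Subsingleton := by
    rintro _ ⟨z, hz, rfl⟩ _ ⟨z', hz', rfl⟩
    exact eq_of_ae_hasFDerivAt_zero hU hUc hlip.locallyLipschitzOn hfderiv hz hz'
  have hclosure := hconst.closure.anti (image_closure_subset_closure_image hlip.continuous)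
  have heq := hclosure (mem_image_of_mem _ hx) (mem_image_of_mem _ hx')
  rw [← h₁.1.coe_toReal hc x, ← h₂.1.coe_toReal hc x, ← h₁.1.coe_toReal hc x',
    ← h₂.1.coe_toReal hc x']
  exact_mod_cast heq

theorem stmt19_general (m : Measure V) [m.IsAddHaarMeasure] {π : Measure (V × Y)}
    [IsFiniteMeasure π] (hπ₁ : π.fst ≪ m.restrict (mSupport π.fst))
    (hπ₂ : m.restrict (mSupport π.fst) ≪ π.fst) (hbd : m (frontier (mSupport π.fst)) = 0)
    (hconn : IsPreconnected (interior (mSupport π.fst))) {c : V → Y → ℝ}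
    (hdiff : ∀ p ∈ mSupport π, DifferentiableAt ℝ (fun x => c x p.2) p.1)
    (hc : UniformlyLocallyLipschitz c) :
    UniquenessOfPotentials c (mSupport π) (mSupport π.fst) := by
  have hproj : ∀ᵐ x ∂π.fst, x ∈ Prod.fst '' mSupport π := by
    rw [mSupport_eq_support]
    exact ae_map_mem_image continuous_fst Measure.isClosed_support.measurableSet
      Measure.support_mem_ae
  have hinterior : ∀ᵐ x ∂m, x ∈ interior (mSupport π.fst) → x ∈ Prod.fst '' mSupport π :=
    (ae_restrict_iff' isOpen_interior.measurableSet).1 <|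
      ae_restrict_of_ae_restrict_of_subset interior_subset (hπ₂.ae_le hproj)
  exact (uniquenessOfPotentials_closure m isOpen_interior hconn hinterior hdiff hc).mono <|
    (mSupport_eq_support π.fst).trans_subset (support_subset_closure_interior hπ₁ hbd)

end Uniqueness

/-- uniqueness of Kantorovich potentials for Lipschitz costs. -/
theorem stmt19 (μ : Measure E) [IsProbabilityMeasure μ]
    (ν : Measure Y) [IsProbabilityMeasure ν]
    (hμ₁ : μ ≪ volume.restrict (mSupport μ)) (hμ₂ : volume.restrict (mSupport μ) ≪ μ)
    (hbd : volume (frontier (mSupport μ)) = 0)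
    (hconn : IsConnected (interior (mSupport μ)))
    (c : E → Y → ℝ) (hc : Continuous fun p : E × Y => c p.1 p.2) (hc0 : ∀ x y, 0 ≤ c x y)
    (hdiff : ∀ y, Differentiable ℝ fun x => c x y)
    (hlip : ∀ K : Set E, IsCompact K → ∃ L : ℝ,
      ∀ x ∈ K, ∀ x' ∈ K, ∀ y, |c x y - c x' y| ≤ L * ‖x - x'‖)
    (π : Measure (E × Y)) (hπ : IsCoupling μ ν π)
    (hfin : transportCost c π ≠ ⊤)
    (hopt : ∀ π', IsCoupling μ ν π' → transportCost c π ≤ transportCost c π') :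
    ∀ ψ₁ ψ₂ : E → EReal,
      IsKantorovichPotential c (mSupport π) ψ₁ → IsKantorovichPotential c (mSupport π) ψ₂ →
      ∀ x ∈ mSupport μ, ∀ x' ∈ mSupport μ, ψ₁ x - ψ₂ x = ψ₁ x' - ψ₂ x' := by
  obtain ⟨_, rfl, -⟩ := hπ
  exact stmt19_general volume hμ₁ hμ₂ hbd hconn.isPreconnected (fun p _ => hdiff p.2 p.1)
    (.of_abs_sub_le hlip)

end Statement

end EOT
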